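/- Fix reals ρ > 0 and θ > 0 and natural numbers m ≥ 1 and n₀ ≥ m. Let Δ = (m+ρ+θ)² − 4mρ (which is strictly positive), A = [m+ρ+θ − √Δ]/(2m), B = [m+ρ+θ + √Δ]/(2m), and assume (m+1)F_{m+1}(θ) − A m F_m(θ) ≠ 0. Define, with R = [(m+1)F_{m+1}(θ) − B m F_m(θ)]/[A m F_m(θ) − (m+1)F_{m+1}(θ)]: P̂_n = B^{m−n₀} F_n(θ)/[(m+1)F_{m+1}(θ) − A m F_m(θ)] for 0 ≤ n ≤ m; P̂_n = [B^{n−n₀} + A^{n−m} B^{m−n₀} R]/√Δ for m ≤ n ≤ n₀; and P̂_n = [A^{n−n₀} + B^{m−n₀} A^{n−m} R]/√Δ for n ≥ n₀. Then the three formulas agree at n = m and at n = n₀, and the family (P̂_n)_{n≥0} satisfies: P̂_1 = (ρ+θ) P̂_0; (n+1) P̂_{n+1} + ρ P̂_{n−1} − (ρ+θ+n) P̂_n = 0 for 1 ≤ n ≤ m−1; and m P̂_{n+1} + ρ P̂_{n−1} − (ρ+θ+m) P̂_n = −δ(n,n₀) for all n ≥ m, where δ(n,n₀) = 1 if n = n₀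 and 0 otherwise. -/

import Mathlib

open Finset

/-- F_n(θ) = Σ_{ℓ=0}^{n} [ρ^{n−ℓ}/((n−ℓ)! ℓ!)] (θ)_ℓ, with (θ)_ℓ the rising factorial. -/
noncomputable def erlF (ρ θ : ℝ) (n : ℕ) : ℝ :=
  ∑ ℓ ∈ Finset.range (n + 1),
    ρ ^ (n - ℓ) / ((n - ℓ).factorial * ℓ.factorial) * (ascPochhammer ℝ ℓ).eval θ

noncomputable def auxA (ρ : ℝ) : PowerSeries ℝ := PowerSeries.mk fun k => ρ ^ k / (k.factorial : ℝ)
noncomputable def auxB (θ : ℝ) : PowerSeries ℝ :=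
  PowerSeries.mk fun l => (ascPochhammer ℝ l).eval θ / (l.factorial : ℝ)

lemma erlF_eq_coeff (ρ θ : ℝ) (n : ℕ) :
    erlF ρ θ n = PowerSeries.coeff n (auxB θ * auxA ρ) := by
  rw [PowerSeries.coeff_mul, Finset.Nat.sum_antidiagonal_eq_sum_range_succ_mk]
  unfold erlF
  apply Finset.sum_congr rfl
  intro l _
  simp only [auxA, auxB, PowerSeries.coeff_mk]
  have h1 : ((n - l).factorial : ℝ) ≠ 0 := by positivity
  have h2 : (l.factorial : ℝ) ≠ 0 := by positivity
  field_simp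

lemma auxA_d (ρ : ℝ) : PowerSeries.derivative ℝ (auxA ρ) = PowerSeries.C ρ * auxA ρ := by
  ext n
  rw [PowerSeries.coeff_derivative, PowerSeries.coeff_C_mul]
  simp only [auxA, PowerSeries.coeff_mk, Nat.factorial_succ]
  have h2 : (n.factorial : ℝ) ≠ 0 := by positivity
  have h3 : (n : ℝ) + 1 ≠ 0 := by positivity
  push_cast
  field_simp
  ring

lemma auxB_d (θ : ℝ) : PowerSeries.derivative ℝ (auxB θ)
    = PowerSeries.X * PowerSeries.derivative ℝ (auxB θ) + PowerSeries.C θ * auxB θ := by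
  have key : ∀ n : ℕ, PowerSeries.coeff n (PowerSeries.derivative ℝ (auxB θ)) =
      (θ + n) * PowerSeries.coeff n (auxB θ) := by
    intro n
    rw [PowerSeries.coeff_derivative]
    simp only [auxB, PowerSeries.coeff_mk, Nat.factorial_succ, ascPochhammer_succ_eval]
    have h2 : (n.factorial : ℝ) ≠ 0 := by positivity
    have h3 : (n : ℝ) + 1 ≠ 0 := by positivity
    push_cast
    field_simp
  ext n
  rw [map_add, PowerSeries.coeff_C_mul, key]
  cases n with
  | zero => simp
  | succ k =>
    rw [PowerSeries.coeff_succ_X_mul, PowerSeries.coeff_derivative]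
    push_cast
    ring

lemma aux_d (ρ θ : ℝ) : PowerSeries.derivative ℝ (auxB θ * auxA ρ)
    + PowerSeries.X * (PowerSeries.C ρ * (auxB θ * auxA ρ))
    = PowerSeries.X * PowerSeries.derivative ℝ (auxB θ * auxA ρ)
    + PowerSeries.C (ρ + θ) * (auxB θ * auxA ρ) := by
  rw [Derivation.leibniz, auxA_d, map_add]
  simp only [smul_eq_mul]
  linear_combination auxA ρ * auxB_d θ

lemma erlF_one (ρ θ : ℝ) : erlF ρ θ 1 = (ρ + θ) * erlF ρ θ 0 := by
  simp [erlF, Finset.sum_range_succ]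

lemma erlF_rec (ρ θ : ℝ) (n : ℕ) : ((n : ℝ) + 2) * erlF ρ θ (n + 2) + ρ * erlF ρ θ n
    = (ρ + θ + (n + 1)) * erlF ρ θ (n + 1) := by
  have h := congrArg (PowerSeries.coeff (n + 1)) (aux_d ρ θ)
  simp only [map_add (PowerSeries.coeff (n + 1)), PowerSeries.coeff_succ_X_mul,
    PowerSeries.coeff_C_mul, PowerSeries.coeff_derivative, ← erlF_eq_coeff] at h
  push_cast at h
  linear_combination h

/-- the explicit family P̂_n solves the Laplace-transformed forward
Kolmogorov system of the M/M/m queue started in state n₀ ≥ m; moreover Δ > 0 and the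
three defining formulas agree at n = m and at n = n₀. -/
theorem mmm_queue_transform_solves_system (ρ θ : ℝ) (hρ : 0 < ρ) (hθ : 0 < θ)
    (m n₀ : ℕ) (hm : 1 ≤ m) (hn₀ : m ≤ n₀)
    (Δ A B R : ℝ)
    (hΔ : Δ = ((m : ℝ) + ρ + θ) ^ 2 - 4 * m * ρ)
    (hA : A = ((m : ℝ) + ρ + θ - Real.sqrt Δ) / (2 * m))
    (hB : B = ((m : ℝ) + ρ + θ + Real.sqrt Δ) / (2 * m))
    (hden : ((m : ℝ) + 1) * erlF ρ θ (m + 1) - A * m * erlF ρ θ m ≠ 0)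
    (hR : R = (((m : ℝ) + 1) * erlF ρ θ (m + 1) - B * m * erlF ρ θ m)
      / (A * m * erlF ρ θ m - ((m : ℝ) + 1) * erlF ρ θ (m + 1)))
    (f1 f2 f3 P : ℕ → ℝ)
    (hf1 : ∀ n : ℕ, f1 n = B ^ ((m : ℤ) - (n₀ : ℤ)) * erlF ρ θ n
      / (((m : ℝ) + 1) * erlF ρ θ (m + 1) - A * m * erlF ρ θ m))
    (hf2 : ∀ n : ℕ, f2 n = (B ^ ((n : ℤ) - (n₀ : ℤ))
      + A ^ ((n : ℤ) - (m : ℤ)) * B ^ ((m : ℤ) - (n₀ : ℤ)) * R) / Real.sqrt Δ)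
    (hf3 : ∀ n : ℕ, f3 n = (A ^ ((n : ℤ) - (n₀ : ℤ))
      + B ^ ((m : ℤ) - (n₀ : ℤ)) * A ^ ((n : ℤ) - (m : ℤ)) * R) / Real.sqrt Δ)
    (hP : ∀ n : ℕ, P n = if n ≤ m then f1 n else if n ≤ n₀ then f2 n else f3 n) :
    0 < Δ
    ∧ f1 m = f2 m
    ∧ f2 n₀ = f3 n₀
    ∧ P 1 = (ρ + θ) * P 0
    ∧ (∀ n : ℕ, 1 ≤ n → n < m →
        ((n : ℝ) + 1) * P (n + 1) + ρ * P (n - 1) - (ρ + θ + n) * P n = 0)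
    ∧ ∀ n : ℕ, m ≤ n →
        (m : ℝ) * P (n + 1) + ρ * P (n - 1) - (ρ + θ + m) * P n
          = -(if n = n₀ then (1 : ℝ) else 0) := by
  have hm0 : (0 : ℝ) < m := by exact_mod_cast hm
  have hΔ0 : 0 < Δ := by
    rw [hΔ]
    nlinarith [sq_nonneg ((m : ℝ) - ρ), mul_pos hm0 hθ, mul_pos hρ hθ, mul_pos hθ hθ]
  have hs : 0 < Real.sqrt Δ := Real.sqrt_pos.mpr hΔ0
  have hss : Real.sqrt Δ ^ 2 = Δ := Real.sq_sqrt hΔ0.le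
  set s := Real.sqrt Δ with hsdef
  have hBA : m * (B - A) = s := by rw [hA, hB]; field_simp; ring
  have hsum : m * (A + B) = m + ρ + θ := by rw [hA, hB]; field_simp; ring
  have hprod : m * (A * B) = ρ := by
    rw [hA, hB]; field_simp; linear_combination (-1 : ℝ) * hss - hΔ
  have hABne : A * B ≠ 0 := by
    intro h; rw [h] at hprod; linarith
  have hA0 : A ≠ 0 := left_ne_zero_of_mul hABne
  have hB0 : B ≠ 0 := right_ne_zero_of_mul hABne
  have qA : m * A ^ 2 + ρ - (ρ + θ + m) * A = 0 := by linear_combination A * hsum - hprod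
  have qB : m * B ^ 2 + ρ - (ρ + θ + m) * B = 0 := by linear_combination B * hsum - hprod
  have zrec : ∀ x : ℝ, x ≠ 0 → m * x ^ 2 + ρ - (ρ + θ + m) * x = 0 → ∀ k : ℤ,
      m * x ^ (k + 2) + ρ * x ^ k - (ρ + θ + m) * x ^ (k + 1) = 0 := by
    intro x hx h k
    rw [zpow_add₀ hx, zpow_add₀ hx]
    simp only [zpow_one, zpow_ofNat]
    linear_combination x ^ k * h
  have r2 : ∀ n : ℕ, m * f2 (n + 2) + ρ * f2 n - (ρ + θ + m) * f2 (n + 1) = 0 := by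
    intro n
    have a := zrec A hA0 qA ((n : ℤ) - m)
    have b := zrec B hB0 qB ((n : ℤ) - n₀)
    rw [hf2, hf2, hf2]
    push_cast
    rw [show (n : ℤ) + 2 - n₀ = n - n₀ + 2 by ring, show (n : ℤ) + 1 - n₀ = n - n₀ + 1 by ring,
      show (n : ℤ) + 2 - m = n - m + 2 by ring, show (n : ℤ) + 1 - m = n - m + 1 by ring]
    linear_combination (b + B ^ ((m : ℤ) - n₀) * R * a) / s
  have r3 : ∀ n : ℕ, m * f3 (n + 2) + ρ * f3 n - (ρ + θ + m) * f3 (n + 1) = 0 := by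
    intro n
    have a := zrec A hA0 qA ((n : ℤ) - m)
    have b := zrec A hA0 qA ((n : ℤ) - n₀)
    rw [hf3, hf3, hf3]
    push_cast
    rw [show (n : ℤ) + 2 - n₀ = n - n₀ + 2 by ring, show (n : ℤ) + 1 - n₀ = n - n₀ + 1 by ring,
      show (n : ℤ) + 2 - m = n - m + 2 by ring, show (n : ℤ) + 1 - m = n - m + 1 by ring]
    linear_combination (b + B ^ ((m : ℤ) - n₀) * R * a) / s
  have r1 : ∀ n : ℕ, ((n : ℝ) + 2) * f1 (n + 2) + ρ * f1 n - (ρ + θ + (n + 1)) * f1 (n + 1) = 0 := by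
    intro n
    rw [hf1, hf1, hf1]
    linear_combination B ^ ((m : ℤ) - n₀) / (((m : ℝ) + 1) * erlF ρ θ (m + 1) - A * m * erlF ρ θ m)
      * erlF_rec ρ θ n
  have hRD : R * (((m : ℝ) + 1) * erlF ρ θ (m + 1) - A * m * erlF ρ θ m)
      = -(((m : ℝ) + 1) * erlF ρ θ (m + 1) - B * m * erlF ρ θ m) := by
    have : A * m * erlF ρ θ m - ((m : ℝ) + 1) * erlF ρ θ (m + 1) ≠ 0 := by
      intro h; apply hden; linarith
    rw [eq_div_iff this] at hR
    linear_combination (-1 : ℝ) * hR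
  have e12 : f1 m = f2 m := by
    rw [hf1, hf2, div_eq_div_iff hden hs.ne']
    simp only [sub_self, zpow_zero]
    linear_combination (-B ^ ((m : ℤ) - n₀)) * hRD - B ^ ((m : ℤ) - n₀) * erlF ρ θ m * hBA
  have e12' : ((m : ℝ) + 1) * f1 (m + 1) = m * f2 (m + 1) := by
    rw [hf1, hf2]
    push_cast
    rw [show (m : ℤ) + 1 - n₀ = m - n₀ + 1 by ring, show (m : ℤ) + 1 - m = 1 by ring,
      zpow_add₀ hB0, zpow_one, zpow_one, ← mul_div_assoc, ← mul_div_assoc,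
      div_eq_div_iff hden hs.ne']
    linear_combination (-B ^ ((m : ℤ) - n₀)) * A * m * hRD
      - B ^ ((m : ℤ) - n₀) * ((m : ℝ) + 1) * erlF ρ θ (m + 1) * hBA
  have e23 : f2 n₀ = f3 n₀ := by
    rw [hf2, hf3]
    simp only [sub_self, zpow_zero]
    ring
  have e23' : m * f3 (n₀ + 1) = m * f2 (n₀ + 1) - 1 := by
    rw [hf2, hf3]
    push_cast
    rw [show (n₀ : ℤ) + 1 - n₀ = 1 by ring, zpow_one, zpow_one]
    field_simp
    linear_combination (-1 : ℝ) * hBA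
  have em : f1 (m - 1) = f2 (m - 1) := by
    have a2 := r2 (m - 1)
    have a1 := r1 (m - 1)
    obtain ⟨k, rfl⟩ : ∃ k, m = k + 1 := ⟨m - 1, by omega⟩
    simp only [Nat.add_sub_cancel] at *
    push_cast at *
    have : ρ * f1 k = ρ * f2 k := by
      linear_combination a1 - a2 - e12' + (ρ + θ + (k + 1)) * e12
    exact mul_left_cancel₀ hρ.ne' this
  have P1 : ∀ n, n ≤ m → P n = f1 n := fun n h => by rw [hP, if_pos h]
  have P2 : ∀ n, m ≤ n + 1 → n ≤ n₀ → P n = f2 n := by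
    intro n h h'
    rw [hP]
    split_ifs with c
    · rcases Nat.lt_or_ge n m with c' | c'
      · obtain rfl : n = m - 1 := by omega
        exact em
      · obtain rfl : n = m := by omega
        exact e12
    · rfl
  have P3 : ∀ n, n₀ ≤ n → P n = f3 n := by
    intro n h
    rcases Nat.eq_or_lt_of_le h with c | c
    · subst c
      rw [P2 n₀ (by omega) le_rfl, e23]
    · rw [hP, if_neg (by omega), if_neg (by omega)]
  refine ⟨hΔ0, e12, e23, ?_, ?_, ?_⟩
  · rw [P1 1 hm, P1 0 (by omega), hf1, hf1, erlF_one]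
    ring
  · intro n h1 h2
    obtain ⟨k, rfl⟩ : ∃ k, n = k + 1 := ⟨n - 1, by omega⟩
    rw [P1 _ h2, P1 _ h2.le, Nat.add_sub_cancel, P1 k (by omega)]
    push_cast
    linear_combination r1 k
  · intro n hn
    obtain ⟨k, rfl⟩ : ∃ k, n = k + 1 := ⟨n - 1, by omega⟩
    rw [Nat.add_sub_cancel]
    rcases lt_trichotomy (k + 1) n₀ with c | c | c
    · rw [if_neg (by omega), P2 (k + 1 + 1) (by omega) c, P2 k hn (by omega),
        P2 (k + 1) (by omega) c.le]
      linear_combination r2 k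
    · rw [if_pos c, P3 (k + 1 + 1) (by omega), P2 k hn (by omega),
        P2 (k + 1) (by omega) c.le]
      rw [← c] at e23'
      linear_combination r2 k + e23'
    · rw [if_neg (by omega), P3 (k + 1 + 1) (by omega), P3 k (by omega),
        P3 (k + 1) (by omega)]
      linear_combination r3 k
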